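/- Let V be a 2-dimensional complex vector space, η a nonzero element of Λ²V*, and ω a positive real (1,1)-form on V. If W ⊆ V^k is a k-dimensional complex linear subspace that is Lagrangian for the symplectic form η_k = Σᵢ prᵢ*η on V^k, then the (k,k)-form ∏ᵢ prᵢ*ω restricts to a volume form on W (i.e., is nonzero on W). -/

import Mathlib

open Module

/-- Evaluation of the (real) wedge product `ρ 0 ∧ ⋯ ∧ ρ (k-1)` of `k` real 2-forms on a
real vector space, on a `2k`-tuple of vectors (up to a nonzero combinatorial constant). -/
noncomputable def wedgeEval {V' : Type*} (k : ℕ) (ρ : Fin k → V' → V' → ℝ)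
    (v : Fin (2 * k) → V') : ℝ :=
  ∑ σ : Equiv.Perm (Fin (2 * k)),
    ((Equiv.Perm.sign σ : ℤ) : ℝ) *
      ∏ i : Fin k,
        ρ i (v (σ ⟨2 * i.1, by have := i.2; omega⟩))
            (v (σ ⟨2 * i.1 + 1, by have := i.2; omega⟩))

/-- Indexing of `2k` vectors by pairs. -/
def pairEquiv (k : ℕ) : Fin k × Fin 2 ≃ Fin (2 * k) :=
  finProdFinEquiv.trans (finCongr (mul_comm k 2))

lemma pairEquiv_zero (k : ℕ) (i : Fin k) (h : 2 * i.1 < 2 * k) :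
    (⟨2 * i.1, h⟩ : Fin (2 * k)) = pairEquiv k (i, 0) := by
  ext; simp [pairEquiv]

lemma pairEquiv_one (k : ℕ) (i : Fin k) (h : 2 * i.1 + 1 < 2 * k) :
    (⟨2 * i.1 + 1, h⟩ : Fin (2 * k)) = pairEquiv k (i, 1) := by
  ext; simp [pairEquiv, add_comm]

lemma wedge_perm {U : Type*} (k : ℕ) (ρ : Fin k → U → U → ℝ) (v : Fin k × Fin 2 → U) :
    wedgeEval k ρ (fun j => v ((pairEquiv k).symm j)) =
      ∑ σ : Equiv.Perm (Fin k × Fin 2), ((Equiv.Perm.sign σ : ℤ) : ℝ) *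
        ∏ i, ρ i (v (σ (i, 0))) (v (σ (i, 1))) := by
  unfold wedgeEval
  symm
  refine Fintype.sum_equiv (pairEquiv k).permCongr _ _ fun σ => ?_
  rw [Equiv.Perm.sign_permCongr]
  congr 1
  refine Finset.prod_congr rfl fun i _ => ?_
  simp only [pairEquiv_zero, pairEquiv_one, Equiv.permCongr_apply, Equiv.symm_apply_apply]

lemma normSq_det (k : ℕ) (M : Matrix (Fin k) (Fin k) ℂ) :
    Complex.normSq M.det = ∑ σ : Equiv.Perm (Fin k × Fin 2), ((Equiv.Perm.sign σ : ℤ) : ℝ) *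
        ∏ i : Fin k, ((!![(M (σ (i, 0)).1 i).re, -(M (σ (i, 0)).1 i).im;
            (M (σ (i, 0)).1 i).im, (M (σ (i, 0)).1 i).re] : Matrix (Fin 2) (Fin 2) ℝ)
              (σ (i, 0)).2 0 *
          (!![(M (σ (i, 1)).1 i).re, -(M (σ (i, 1)).1 i).im;
            (M (σ (i, 1)).1 i).im, (M (σ (i, 1)).1 i).re] : Matrix (Fin 2) (Fin 2) ℝ)
              (σ (i, 1)).2 1) := by
  rw [← Algebra.norm_complex_apply, Algebra.norm_eq_matrix_det Complex.basisOneI,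
    ← AlgHom.coe_toRingHom, Matrix.det_det, Matrix.det_apply']
  refine Finset.sum_congr rfl fun σ _ => ?_
  congr 1
  rw [Fintype.prod_prod_type]
  refine Finset.prod_congr rfl fun i _ => ?_
  rw [Fin.prod_univ_two]
  simp [Matrix.comp_apply, Algebra.leftMulMatrix_complex]

lemma wedge_eq {U κ : Type*} [AddCommGroup U] [Module ℂ U] [Fintype κ] (k : ℕ)
    (g : κ → Fin k → U →ₗ[ℂ] ℂ) (b : Fin k → U) (ρ : Fin k → U → U → ℝ)
    (hρ : ∀ i x y, ρ i x y = ∑ t, (g t i x).re * -(g t i y).im) :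
    wedgeEval k ρ (fun j => (fun p : Fin k × Fin 2 =>
      if p.2 = 0 then b p.1 else (-Complex.I) • b p.1) ((pairEquiv k).symm j)) =
      ∑ s : Fin k → κ, Complex.normSq (Matrix.det (Matrix.of fun j i => g (s i) i (b j))) := by
  rw [wedge_perm k ρ (fun p : Fin k × Fin 2 =>
      if p.2 = 0 then b p.1 else (-Complex.I) • b p.1)]
  simp_rw [hρ, Fintype.prod_sum, Finset.mul_sum]
  rw [Finset.sum_comm]
  refine Finset.sum_congr rfl fun s _ => ?_
  rw [normSq_det]
  refine Finset.sum_congr rfl fun σ _ => ?_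
  congr 1
  refine Finset.prod_congr rfl fun i _ => ?_
  have h0 : ∀ p : Fin k × Fin 2, (g (s i) i (if p.2 = 0 then b p.1 else (-Complex.I) • b p.1)).re
      = (!![(g (s i) i (b p.1)).re, -(g (s i) i (b p.1)).im;
            (g (s i) i (b p.1)).im, (g (s i) i (b p.1)).re] : Matrix (Fin 2) (Fin 2) ℝ) p.2 0 := by
    rintro ⟨j, q⟩
    fin_cases q <;> simp
  have h1 : ∀ p : Fin k × Fin 2, -(g (s i) i (if p.2 = 0 then b p.1 else (-Complex.I) • b p.1)).im
      = (!![(g (s i) i (b p.1)).re, -(g (s i) i (b p.1)).im;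
            (g (s i) i (b p.1)).im, (g (s i) i (b p.1)).re] : Matrix (Fin 2) (Fin 2) ℝ) p.2 1 := by
    rintro ⟨j, q⟩
    fin_cases q <;> simp
  rw [h0, h1]
  simp only [Matrix.of_apply]

lemma exists_coords {V : Type*} [AddCommGroup V] [Module ℂ V]
    (hV : finrank ℂ V = 2)
    (η : V →ₗ[ℂ] V →ₗ[ℂ] ℂ) (hη_alt : ∀ v, η v v = 0) (hη_ne : η ≠ 0)
    (ω : V → V → ℂ)
    (hω_add : ∀ v v' w, ω (v + v') w = ω v w + ω v' w)
    (hω_smul : ∀ (a : ℂ) v w, ω (a • v) w = a * ω v w)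
    (hω_conj : ∀ v w, ω w v = starRingEnd ℂ (ω v w))
    (hω_pos : ∀ v, v ≠ 0 → 0 < (ω v v).re) :
    ∃ z : Bool → V →ₗ[ℂ] ℂ, ∃ c : ℂ, c ≠ 0 ∧
      (∀ x y, ω x y = ∑ t, z t x * starRingEnd ℂ (z t y)) ∧
      (∀ x y, η x y = c * (z false x * z true y - z true x * z false y)) := by
  have h00 : ∀ w, ω 0 w = 0 := fun w => by simpa using hω_smul 0 0 w
  let core : InnerProductSpace.Core ℂ V :=
    { inner := fun x y => ω y x
      conj_inner_symm := fun x y => (hω_conj _ _).symm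
      re_inner_nonneg := fun x => by
        by_cases hx : x = 0
        · simp [hx, h00]
        · exact (hω_pos x hx).le
      add_left := fun x y z => by
        rw [hω_conj, hω_add, map_add, ← hω_conj, ← hω_conj]
      smul_left := fun x y r => by
        rw [hω_conj, hω_smul, map_mul, ← hω_conj]
      definite := fun x hx => by
        by_contra h
        have := hω_pos x h
        rw [hx] at this
        simp at this }
  letI : NormedAddCommGroup V := core.toNormedAddCommGroup
  letI : InnerProductSpace ℂ V := InnerProductSpace.ofCore core.toCore
  haveI : FiniteDimensional ℂ V := FiniteDimensional.of_finrank_pos (by omega)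
  let B := (stdOrthonormalBasis ℂ V).reindex
    ((finCongr hV).trans finTwoEquiv)
  have hin : ∀ x y : V, inner ℂ x y = ω y x := fun x y => rfl
  let z : Bool → V →ₗ[ℂ] ℂ := fun t => B.toBasis.coord t
  have hz : ∀ t x, z t x = ω x (B t) := fun t x => by
    simp [z, OrthonormalBasis.coe_toBasis_repr_apply, OrthonormalBasis.repr_apply_apply, hin]
  have hx : ∀ x, x = z false x • B false + z true x • B true := fun x => by
    have := B.toBasis.sum_repr x
    rw [Fintype.sum_bool, add_comm] at this
    simpa [z] using this.symm
  have hanti : η (B true) (B false) = - η (B false) (B true) := by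
    have := hη_alt (B true + B false)
    simp [hη_alt] at this
    linear_combination this
  have hη : ∀ x y, η x y = η (B false) (B true) * (z false x * z true y - z true x * z false y) := by
    intro x y
    conv_lhs => rw [hx x, hx y]
    simp only [map_add, map_smul, LinearMap.add_apply, LinearMap.smul_apply, smul_eq_mul, hη_alt,
      hanti]
    ring
  refine ⟨z, η (B false) (B true), ?_, ?_, hη⟩
  · intro h0
    apply hη_ne
    ext x y
    rw [hη, h0]; simp
  · intro x y
    rw [← hin, ← B.sum_inner_mul_inner y x]
    refine Finset.sum_congr rfl fun t _ => ?_
    rw [hz, hz, hin, hin, ← hω_conj, mul_comm]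

lemma exists_transverse {V : Type*} [AddCommGroup V] [Module ℂ V] (z : Bool → V →ₗ[ℂ] ℂ)
    (hz : ∀ x, z false x = 0 → z true x = 0 → x = 0)
    (k : ℕ) (W : Submodule ℂ (Fin k → V))
    (hLag : ∀ v ∈ W, ∀ w ∈ W,
      ∑ i, (z false (v i) * z true (w i) - z true (v i) * z false (w i)) = 0) :
    ∃ s : Fin k → Bool, ∀ x ∈ W, (∀ i, z (s i) (x i) = 0) → x = 0 := by
  classical
  let K : Submodule ℂ (Fin k → V) :=
    W ⊓ ⨅ i, LinearMap.ker ((z false).comp (LinearMap.proj i))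
  have hK : ∀ x, x ∈ K ↔ x ∈ W ∧ ∀ i, z false (x i) = 0 := by
    intro x; simp [K, Submodule.mem_iInf]
  let f : Fin k → (K →ₗ[ℂ] ℂ) := fun i => ((z true).comp (LinearMap.proj i)).comp K.subtype
  obtain ⟨I, -, -, hspan, hind⟩ := exists_linearIndepOn_extension
    (linearIndepOn_empty ℂ f) (Set.empty_subset Set.univ)
  refine ⟨fun i => decide (i ∈ I), fun x hxW hx => ?_⟩
  have hxI : ∀ i ∈ I, z true (x i) = 0 := fun i hi => by simpa [hi] using hx i
  have hxI' : ∀ i ∉ I, z false (x i) = 0 := fun i hi => by simpa [hi] using hx i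
  have hsum : ∑ i ∈ I.toFinset, z false (x i) • f i = 0 := by
    ext ⟨y, hy⟩
    have hy' := (hK y).1 hy
    have h := hLag x hxW y hy'.1
    simp only [LinearMap.sum_apply, LinearMap.smul_apply, smul_eq_mul, LinearMap.zero_apply]
    rw [← h]
    rw [← Finset.sum_subset (Finset.subset_univ I.toFinset)]
    · refine Finset.sum_congr rfl fun i _ => ?_
      simp [f, hy'.2]
    · intro i _ hi
      rw [hxI' i (by simpa using hi), hy'.2]; simp
  have hz0 : ∀ i ∈ I, z false (x i) = 0 := by
    intro i hi
    have := (linearIndepOn_finset_iff (s := I.toFinset) (v := f) (R := ℂ)).1 (by simpa using hind)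
      (fun i => z false (x i)) hsum i (by simpa using hi)
    exact this
  have hall : ∀ i, z false (x i) = 0 := fun i => by
    by_cases hi : i ∈ I
    exacts [hz0 i hi, hxI' i hi]
  have hxK : x ∈ K := (hK x).2 ⟨hxW, hall⟩
  have hw : ∀ φ ∈ Submodule.span ℂ (f '' I), φ ⟨x, hxK⟩ = 0 := by
    intro φ hφ
    induction hφ using Submodule.span_induction with
    | mem φ h => obtain ⟨i, hi, rfl⟩ := h; exact hxI i hi
    | zero => simp
    | add a b _ _ ha hb => simp [ha, hb]
    | smul c a _ ha => simp [ha]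
  funext i
  exact hz _ (hall i) (hw (f i) (hspan ⟨i, trivial, rfl⟩))

/-- Let `V` be a 2-dimensional complex vector space, `η` a nonzero element of `Λ²V*`, and
`ω` a positive real (1,1)-form on `V` (encoded by its positive definite Hermitian form).
If `W ⊆ V^k` is a `k`-dimensional complex subspace which is Lagrangian for
`η_k = Σᵢ prᵢ*η`, then `∏ᵢ prᵢ*ω` restricts to a volume form on `W`, i.e. is nonzero on
some (hence any) `2k`-tuple spanning `W` over `ℝ`. -/
theorem stmt0 {V : Type*} [AddCommGroup V] [Module ℂ V]
    (hV : finrank ℂ V = 2)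
    (η : V →ₗ[ℂ] V →ₗ[ℂ] ℂ) (hη_alt : ∀ v, η v v = 0) (hη_ne : η ≠ 0)
    (ω : V → V → ℂ)
    (hω_add : ∀ v v' w, ω (v + v') w = ω v w + ω v' w)
    (hω_smul : ∀ (a : ℂ) v w, ω (a • v) w = a * ω v w)
    (hω_conj : ∀ v w, ω w v = starRingEnd ℂ (ω v w))
    (hω_pos : ∀ v, v ≠ 0 → 0 < (ω v v).re)
    (k : ℕ) (W : Submodule ℂ (Fin k → V))
    (hdim : finrank ℂ W = k)
    (hLag : ∀ v ∈ W, ∀ w ∈ W, ∑ i, η (v i) (w i) = 0) :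
    ∃ w : Fin (2 * k) → (Fin k → V), (∀ j, w j ∈ W) ∧
      wedgeEval k (fun i x y => (ω (x i) (y i)).im) w ≠ 0 := by
    classical
  obtain ⟨z, c, hc, hω, hη⟩ := exists_coords hV η hη_alt hη_ne ω hω_add hω_smul hω_conj hω_pos
  have hz : ∀ x, z false x = 0 → z true x = 0 → x = 0 := by
    intro x h1 h2
    by_contra h
    have := hω_pos x h
    rw [hω] at this
    simp [h1, h2] at this
  obtain ⟨s, hs⟩ := exists_transverse z hz k W (by
    intro v hv w hw
    have := hLag v hv w hw
    simp_rw [hη, ← Finset.mul_sum] at this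
    exact (mul_eq_zero.1 this).resolve_left hc)
  haveI : FiniteDimensional ℂ V := FiniteDimensional.of_finrank_pos (by omega)
  let b := Module.finBasisOfFinrankEq ℂ W hdim
  let g : Bool × Bool → Fin k → (Fin k → V) →ₗ[ℂ] ℂ := fun t i =>
    (if t.1 then (1 : ℂ) else -Complex.I) • (z t.2).comp (LinearMap.proj i)
  have key := wedge_eq k g (fun j => (b j : Fin k → V))
    (fun i x y => (ω (x i) (y i)).im) (by
      intro i x y
      simp [g, hω, Fintype.sum_prod_type]
      ring)
  refine ⟨_, ?_, key.trans_ne ?_⟩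
  · intro j
    dsimp only
    split_ifs
    · exact (b _).2
    · exact W.smul_mem _ (b _).2
  · refine (Finset.sum_pos' (fun _ _ => Complex.normSq_nonneg _)
      ⟨fun i => (true, s i), Finset.mem_univ _, Complex.normSq_pos.2 ?_⟩).ne'
    rw [← Matrix.det_transpose]
    intro h0
    obtain ⟨a, ha, hM⟩ := Matrix.exists_mulVec_eq_zero_iff.2 h0
    apply ha
    have hx : ((∑ j, a j • b j : W) : Fin k → V) = 0 := by
      refine hs _ (Submodule.coe_mem _) fun i => ?_
      have := congrFun hM i
      simp only [Matrix.mulVec, dotProduct, Matrix.transpose_apply, Matrix.of_apply, g,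
        Pi.zero_apply] at this
      rw [← this]
      simp [Finset.sum_apply, mul_comm]
    have hx' : (∑ j, a j • b j : W) = 0 := Subtype.ext hx
    funext j
    exact Fintype.linearIndependent_iff.1 b.linearIndependent a hx' j
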